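/- Let μ be a finite (Borel) measure on ℝ³ that is invariant under every rotation R_α about the x₃-axis (i.e., the pushforward of μ under R_α equals μ for every angle α), and let g : ℝ³ → ℝ be a bounded measurable function that is axisymmetric, i.e., g(R_α x) = g(x) for all α and x. Define e_r : ℝ³ → ℝ³ by e_r(x) = (x₁/√(x₁²+x₂²), x₂/√(x₁²+x₂²), 0) for x₁² + x₂² > 0 and e_r(x) = 0 when x₁² + x₂² = 0. Then the ℝ³-valued integral ∫_{ℝ³} g(x) e_r(x) dμ(x) equals the zero vector. -/

import Mathlib

open MeasureTheory

noncomputable section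

/-- Rotation of `ℝ³` about the `x₃`-axis by angle `α`. -/
def rotZ (α : ℝ) (x : EuclideanSpace ℝ (Fin 3)) : EuclideanSpace ℝ (Fin 3) :=
  (WithLp.equiv 2 (Fin 3 → ℝ)).symm
    ![x 0 * Real.cos α - x 1 * Real.sin α, x 0 * Real.sin α + x 1 * Real.cos α, x 2]

/-- Radial unit vector field of cylindrical coordinates, extended by `0` on the axis. -/
def erAx (x : EuclideanSpace ℝ (Fin 3)) : EuclideanSpace ℝ (Fin 3) :=
  if x 0 ^ 2 + x 1 ^ 2 = 0 then 0 else
    (WithLp.equiv 2 (Fin 3 → ℝ)).symm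
      ![x 0 / Real.sqrt (x 0 ^ 2 + x 1 ^ 2), x 1 / Real.sqrt (x 0 ^ 2 + x 1 ^ 2), 0]

/-! The field `e_r` commutes with the rotations about the axis, so for invariant `μ` and `g` the
vector `∫ g e_r dμ` is fixed by a rotation. A nontrivial rotation fixes only the axis, and `e_r` has
no component along it. -/

section Equivariance

variable {X 𝕜 F : Type*} [MeasurableSpace X] {μ : Measure X} [RCLike 𝕜]
  [NormedAddCommGroup F] [NormedSpace ℝ F] [NormedSpace 𝕜 F] [CompleteSpace F]

theorem map_integral_eq_integral_of_equivariant {T : X → X} (hT : MeasurePreserving T μ μ)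
    (L : F →L[𝕜] F) {f : X → F} (hf : Integrable f μ) (hequiv : ∀ᵐ x ∂μ, f (T x) = L (f x)) :
    L (∫ x, f x ∂μ) = ∫ x, f x ∂μ :=
  calc
    L (∫ x, f x ∂μ) = ∫ x, L (f x) ∂μ := (L.integral_comp_comm hf).symm
    _ = ∫ x, f (T x) ∂μ := integral_congr_ae (hequiv.mono fun _ hx => hx.symm)
    _ = ∫ x, f x ∂μ.map T :=
      (integral_map hT.aemeasurable (hT.map_eq.symm ▸ hf.aestronglyMeasurable)).symm
    _ = ∫ x, f x ∂μ := by rw [hT.map_eq]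

end Equivariance

section Rotation

variable (α : ℝ) (x : EuclideanSpace ℝ (Fin 3))

@[simp]
theorem rotZ_apply_zero : rotZ α x 0 = x 0 * Real.cos α - x 1 * Real.sin α := rfl

@[simp]
theorem rotZ_apply_one : rotZ α x 1 = x 0 * Real.sin α + x 1 * Real.cos α := rfl

@[simp]
theorem rotZ_apply_two : rotZ α x 2 = x 2 := rfl

/-- The rotation `rotZ α` as a continuous linear map, so that it can be moved across an integral. -/
def rotZCLM : EuclideanSpace ℝ (Fin 3) →L[ℝ] EuclideanSpace ℝ (Fin 3) :=
  LinearMap.toContinuousLinearMap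
    { toFun := rotZ α
      map_add' := fun x y => by
        ext i
        fin_cases i <;> simp <;> ring
      map_smul' := fun c x => by
        ext i
        fin_cases i <;> simp <;> ring }

@[simp]
theorem rotZCLM_apply : rotZCLM α x = rotZ α x := rfl

theorem measurable_rotZ : Measurable (rotZ α) := (rotZCLM α).measurable

theorem rotZ_sq_add_sq : rotZ α x 0 ^ 2 + rotZ α x 1 ^ 2 = x 0 ^ 2 + x 1 ^ 2 := by
  rw [rotZ_apply_zero, rotZ_apply_one]
  linear_combination (x 0 ^ 2 + x 1 ^ 2) * Real.sin_sq_add_cos_sq α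

variable {α x}

theorem eq_zero_of_rotZ_eq_self (hα : Real.cos α ≠ 1) (hfix : rotZ α x = x) (hx : x 2 = 0) :
    x = 0 := by
  have hfix₀ : x 0 * Real.cos α - x 1 * Real.sin α = x 0 := congr($hfix 0)
  have hfix₁ : x 0 * Real.sin α + x 1 * Real.cos α = x 1 := congr($hfix 1)
  have hcos : 1 - Real.cos α ≠ 0 := sub_ne_zero.mpr hα.symm
  -- The planar part of `R_α - 1` has determinant `(1 - cos α)² + sin² α = 2 (1 - cos α)`.
  have hx₀ : 2 * (1 - Real.cos α) * x 0 = 0 := by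
    linear_combination (Real.cos α - 1) * hfix₀ + Real.sin α * hfix₁ -
      x 0 * Real.sin_sq_add_cos_sq α
  have hx₁ : 2 * (1 - Real.cos α) * x 1 = 0 := by
    linear_combination (Real.cos α - 1) * hfix₁ - Real.sin α * hfix₀ -
      x 1 * Real.sin_sq_add_cos_sq α
  ext i
  fin_cases i
  · simpa [hcos] using hx₀
  · simpa [hcos] using hx₁
  · exact hx

end Rotation

section RadialField

variable (x : EuclideanSpace ℝ (Fin 3))

-- On the axis both quotients are `0 / 0 = 0`.
theorem erAx_eq_toLp :
    erAx x = WithLp.toLp 2 ![x 0 / √(x 0 ^ 2 + x 1 ^ 2), x 1 / √(x 0 ^ 2 + x 1 ^ 2), 0] := by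
  unfold erAx
  split_ifs with haxis
  · ext i
    fin_cases i <;> simp [haxis]
  · rfl

@[simp]
theorem erAx_apply_zero : erAx x 0 = x 0 / √(x 0 ^ 2 + x 1 ^ 2) := by simp [erAx_eq_toLp]

@[simp]
theorem erAx_apply_one : erAx x 1 = x 1 / √(x 0 ^ 2 + x 1 ^ 2) := by simp [erAx_eq_toLp]

@[simp]
theorem erAx_apply_two : erAx x 2 = 0 := by simp [erAx_eq_toLp]

theorem erAx_rotZ (α : ℝ) : erAx (rotZ α x) = rotZ α (erAx x) := by
  ext i
  fin_cases i
  · simp only [Fin.zero_eta, erAx_apply_zero, rotZ_sq_add_sq]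
    rw [rotZ_apply_zero, rotZ_apply_zero, erAx_apply_zero, erAx_apply_one]
    ring
  · simp only [Fin.mk_one, erAx_apply_one, rotZ_sq_add_sq]
    rw [rotZ_apply_one, rotZ_apply_one, erAx_apply_zero, erAx_apply_one]
    ring
  · simp

theorem norm_erAx_le_one : ‖erAx x‖ ≤ 1 := by
  rw [← sq_le_one_iff₀ (norm_nonneg _)]
  calc
    ‖erAx x‖ ^ 2 = (x 0 ^ 2 + x 1 ^ 2) / (x 0 ^ 2 + x 1 ^ 2) := by
      simp [EuclideanSpace.norm_sq_eq, Fin.sum_univ_three, div_pow, add_div,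
        Real.sq_sqrt (add_nonneg (sq_nonneg (x 0)) (sq_nonneg (x 1)))]
    _ ≤ 1 := div_self_le_one _

theorem measurable_erAx : Measurable erAx := by
  have hcoord : ∀ i, Measurable fun x => erAx x i := by
    intro i
    fin_cases i
    · simp only [Fin.zero_eta, erAx_apply_zero]
      fun_prop
    · simp only [Fin.mk_one, erAx_apply_one]
      fun_prop
    · simp
  exact (WithLp.measurable_toLp 2 (Fin 3 → ℝ)).comp (measurable_pi_iff.mpr hcoord)

theorem integrable_erAx (μ : Measure (EuclideanSpace ℝ (Fin 3))) [IsFiniteMeasure μ] :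
    Integrable erAx μ :=
  .of_bound measurable_erAx.aestronglyMeasurable 1 (.of_forall norm_erAx_le_one)

end RadialField

theorem stmt_14_general {μ : Measure (EuclideanSpace ℝ (Fin 3))} {α : ℝ} (hα : Real.cos α ≠ 1)
    (hμ : MeasurePreserving (rotZ α) μ μ) {g : EuclideanSpace ℝ (Fin 3) → ℝ}
    (hg : ∀ᵐ x ∂μ, g (rotZ α x) = g x) (hint : Integrable (fun x => g x • erAx x) μ) :
    (∫ x, g x • erAx x ∂μ) = 0 := by
  have hequiv : ∀ᵐ x ∂μ, g (rotZ α x) • erAx (rotZ α x) = rotZCLM α (g x • erAx x) := by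
    filter_upwards [hg] with x hx
    rw [hx, erAx_rotZ, map_smul, rotZCLM_apply]
  have hfix : rotZ α (∫ x, g x • erAx x ∂μ) = ∫ x, g x • erAx x ∂μ :=
    map_integral_eq_integral_of_equivariant hμ (rotZCLM α) hint hequiv
  have haxial : (∫ x, g x • erAx x ∂μ) 2 = 0 :=
    calc
      (∫ x, g x • erAx x ∂μ) 2 = ∫ x, (g x • erAx x) 2 ∂μ :=
        ((EuclideanSpace.proj 2).integral_comp_comm hint).symm
      _ = 0 := by simp
  exact eq_zero_of_rotZ_eq_self hα hfix haxial

/-- If `μ` is a finite measure on `ℝ³` invariant under all rotations about the `x₃`-axis and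
`g` is a bounded measurable axisymmetric function, then `∫ g e_r dμ = 0`: concentration on
the axis is annihilated by multiplication with `e_r`. -/
theorem stmt_14 (μ : Measure (EuclideanSpace ℝ (Fin 3))) [IsFiniteMeasure μ]
    (hinv : ∀ α : ℝ, μ.map (rotZ α) = μ)
    (g : EuclideanSpace ℝ (Fin 3) → ℝ) (hg : Measurable g)
    (hb : ∃ C : ℝ, ∀ x, |g x| ≤ C)
    (hax : ∀ (α : ℝ) (x : EuclideanSpace ℝ (Fin 3)), g (rotZ α x) = g x) :
    (∫ x, g x • erAx x ∂μ) = 0 := by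
  obtain ⟨C, hC⟩ := hb
  exact stmt_14_general (α := Real.pi) (by norm_num) ⟨measurable_rotZ _, hinv _⟩
    (.of_forall (hax _)) ((integrable_erAx μ).bdd_smul C hg.aestronglyMeasurable (.of_forall hC))

end
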